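/- (Inequality (1.19).) Define H(ξ) = ∫₀^{ξ²} K(√σ) dσ for ξ ≥ 0. Then for every ξ ≥ 0 one has W₁·ξ^{2−a} − a_N/2 ≤ H(ξ) ≤ 2·W₂·ξ^{2−a}, where a = α_N/(α_N+1), W₁ = a_N^a/(2NM) and W₂ = NM/(m·a_N^{1−a}). -/

import Mathlib

/-
Since `K ξ = 1 / g (s ξ) = s ξ / ξ`, everything reduces to the size of `s ξ`. Only three properties
of `g` matter: it is monotone, `c * t ^ A ≤ g t`, and `g t ≤ B * max 1 (t ^ A)`, with `A` the top
exponent.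

* Upper bound: the lower growth of `g` gives `c * s ξ ^ (A + 1) ≤ ξ`, hence
  `K ξ ≤ c ^ (a - 1) * ξ ^ (-a)` for `a = A / (A + 1)`, and this power is integrated explicitly.
* Lower bound: `K` is antitone, so `H ξ ≥ ξ ^ 2 * K ξ = ξ * s ξ`. If `s ξ ≥ 1`, then
  `g (s ξ) ≤ B * s ξ ^ A` bounds `ξ * s ξ` below by a multiple of `ξ ^ (2 - a)`. If `s ξ ≤ 1`, then
  `g (s ξ) ≤ B`, and interpolating `ξ ^ (2 - a)` between `ξ ^ 2` and `ξ` costs only a multiple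
  of `c`.
-/

open Set MeasureTheory

lemma rpow_le_max_one_rpow {p q t : ℝ} (hp : 0 ≤ p) (hpq : p ≤ q) (ht : 0 ≤ t) :
    t ^ p ≤ max 1 (t ^ q) := by
  rcases le_total t 1 with ht₁ | ht₁
  · exact le_max_of_le_left (Real.rpow_le_one ht ht₁ hp)
  · exact le_max_of_le_right (Real.rpow_le_rpow_of_exponent_le ht₁ hpq)

section PowerSum

variable {ι : Type*} {J : Finset ι} {α b : ι → ℝ}

lemma monotoneOn_sum_mul_rpow (hα : ∀ j ∈ J, 0 ≤ α j) (hb : ∀ j ∈ J, 0 ≤ b j) :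
    MonotoneOn (fun t : ℝ => ∑ j ∈ J, b j * t ^ α j) (Ici 0) := fun _ hx _ _ hxy =>
  Finset.sum_le_sum fun j hj =>
    mul_le_mul_of_nonneg_left (Real.rpow_le_rpow hx hxy (hα j hj)) (hb j hj)

lemma mul_rpow_le_sum_mul_rpow (hb : ∀ j ∈ J, 0 ≤ b j) {k : ι} (hk : k ∈ J) {t : ℝ} (ht : 0 ≤ t) :
    b k * t ^ α k ≤ ∑ j ∈ J, b j * t ^ α j :=
  Finset.single_le_sum (f := fun j => b j * t ^ α j)
    (fun j hj => mul_nonneg (hb j hj) (Real.rpow_nonneg ht _)) hk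

lemma sum_mul_rpow_le_sum_mul_max {A : ℝ} (hα : ∀ j ∈ J, α j ∈ Icc 0 A) (hb : ∀ j ∈ J, 0 ≤ b j)
    {t : ℝ} (ht : 0 ≤ t) :
    ∑ j ∈ J, b j * t ^ α j ≤ (∑ j ∈ J, b j) * max 1 (t ^ A) := by
  rw [Finset.sum_mul]
  exact Finset.sum_le_sum fun j hj =>
    mul_le_mul_of_nonneg_left (rpow_le_max_one_rpow (hα j hj).1 (hα j hj).2 ht) (hb j hj)

end PowerSum

lemma sum_range_succ_le_two_mul {N : ℕ} (hN : 1 ≤ N) {b : ℕ → ℝ} {M : ℝ} (hM : 0 ≤ M)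
    (hb : ∀ j ≤ N, b j ≤ M) : ∑ j ∈ Finset.range (N + 1), b j ≤ 2 * N * M := by
  have hN' : (1 : ℝ) ≤ N := by exact_mod_cast hN
  calc ∑ j ∈ Finset.range (N + 1), b j ≤ (N + 1) * M := by
        simpa using Finset.sum_le_card_nsmul (Finset.range (N + 1)) b M
          fun j hj => hb j (Finset.mem_range_succ_iff.1 hj)
    _ ≤ 2 * N * M := by gcongr; linarith

lemma mem_Icc_of_le_succ {N : ℕ} {α : ℕ → ℝ} (hα₀ : α 0 = 0) (hα : ∀ i < N, α i ≤ α (i + 1)) :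
    ∀ j ≤ N, α j ∈ Icc 0 (α N) := by
  have hmono : MonotoneOn α (Iic N) :=
    monotoneOn_of_le_succ ordConnected_Iic fun i _ _ hi => hα i (Nat.lt_of_succ_le hi)
  intro j hj
  exact ⟨hα₀ ▸ hmono (Nat.zero_le N) hj (Nat.zero_le j), hmono hj self_mem_Iic hj⟩

lemma rpow_sub_one_le_div_min_mul_rpow {n M b c : ℝ} (a : ℝ) (hn : 1 ≤ n) (hb : 0 < b) (hc : 0 < c)
    (hcM : c ≤ M) : c ^ (a - 1) ≤ n * M / (min b c * c ^ (1 - a)) := by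
  have hmin : min b c ≤ n * M :=
    calc min b c ≤ 1 * M := by simpa only [one_mul] using (min_le_right b c).trans hcM
      _ ≤ n * M := mul_le_mul_of_nonneg_right hn (hc.le.trans hcM)
  rw [← neg_sub 1 a, Real.rpow_neg hc.le, ← div_div, inv_eq_one_div]
  gcongr
  exact (one_le_div (lt_min hb hc)).2 hmin

section DegeneracyExponent

/-- The exponent `a = A / (A + 1)` at which the conductivity `1 / g (s ξ)` decays when `g` grows
like `t ^ A`. -/
noncomputable def degeneracyExponent (A : ℝ) : ℝ := A / (A + 1)

variable {A : ℝ}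

lemma degeneracyExponent_nonneg (hA : 0 ≤ A) : 0 ≤ degeneracyExponent A :=
  div_nonneg hA (by linarith)

lemma degeneracyExponent_lt_one (hA : 0 ≤ A) : degeneracyExponent A < 1 :=
  (div_lt_one (by linarith)).2 (lt_add_one A)

lemma add_one_mul_degeneracyExponent (hA : 0 ≤ A) : (A + 1) * degeneracyExponent A = A :=
  mul_div_cancel₀ A (by linarith)

lemma add_one_mul_one_sub_degeneracyExponent (hA : 0 ≤ A) :
    (A + 1) * (1 - degeneracyExponent A) = 1 := by
  linarith [add_one_mul_degeneracyExponent hA]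

lemma intervalIntegrable_mul_rpow_neg_degeneracyExponent_half (hA : 0 ≤ A) (C b : ℝ) :
    IntervalIntegrable (fun σ : ℝ => C * σ ^ (-(degeneracyExponent A / 2))) volume 0 b :=
  (intervalIntegral.intervalIntegrable_rpow'
    (by linarith [degeneracyExponent_lt_one hA])).const_mul C

end DegeneracyExponent

section PointwiseBounds

variable {A B a c t G ξ : ℝ}

lemma mul_rpow_add_one_le_mul (hA : 0 ≤ A) (ht : 0 ≤ t) (hG : c * t ^ A ≤ G) :
    c * t ^ (A + 1) ≤ t * G := by
  calc c * t ^ (A + 1) = t * (c * t ^ A) := by rw [Real.rpow_add_one' ht (by linarith)]; ring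
    _ ≤ t * G := by gcongr

lemma rpow_mul_rpow_le_rpow {p q : ℝ} (hc : 0 ≤ c) (ht : 0 ≤ t) (hp : 0 ≤ p)
    (h : c * t ^ q ≤ ξ) : c ^ p * t ^ (q * p) ≤ ξ ^ p := by
  rw [Real.rpow_mul ht, ← Real.mul_rpow hc (by positivity)]
  exact Real.rpow_le_rpow (by positivity) h hp

lemma rpow_mul_rpow_two_sub_le_interpolation (hc : 0 ≤ c) (hξ : 0 ≤ ξ) (ha₀ : 0 ≤ a) (ha₁ : a ≤ 1) :
    c ^ a * ξ ^ (2 - a) ≤ (1 - a) * ξ ^ 2 + a * (c * ξ) := by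
  have hsplit : ξ ^ (2 - a) = (ξ ^ 2) ^ (1 - a) * ξ ^ a := by
    rw [← Real.rpow_natCast_mul hξ, ← Real.rpow_add' hξ (by push_cast; linarith)]
    push_cast
    ring_nf
  calc c ^ a * ξ ^ (2 - a) = (ξ ^ 2) ^ (1 - a) * (c * ξ) ^ a := by
        rw [hsplit, Real.mul_rpow hc hξ]; ring
    _ ≤ (1 - a) * ξ ^ 2 + a * (c * ξ) :=
        Real.geom_mean_le_arith_mean2_weighted (by linarith) ha₀ (by positivity) (by positivity)
          (by ring)

lemma rpow_mul_rpow_two_sub_le_of_le_const (hc : 0 ≤ c) (hcB : c ≤ B) (ht : 0 ≤ t) (hG : 0 ≤ G)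
    (hGB : G ≤ B) (ha₀ : 0 ≤ a) (ha₁ : a ≤ 1) :
    c ^ a * (t * G) ^ (2 - a) ≤ B * (t * G * t + c / 4) := by
  have hB : 0 ≤ B := hc.trans hcB
  have hsq : (t * G) ^ 2 ≤ B * (t * G * t + c / 4) := by
    calc (t * G) ^ 2 = G * (t * G * t) := by ring
      _ ≤ B * (t * G * t + c / 4) := by gcongr; linarith
  have hlin : c * (t * G) ≤ B * (t * G * t + c / 4) := by
    have hquarter : t * (1 - t) ≤ 1 / 4 := by linarith [sq_nonneg (t - 1 / 2)]
    calc c * (t * G) = c * (t * G * t) + t * (1 - t) * (c * G) := by ring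
      _ ≤ B * (t * G * t) + 1 / 4 * (c * B) := by gcongr
      _ = B * (t * G * t + c / 4) := by ring
  calc c ^ a * (t * G) ^ (2 - a) ≤ (1 - a) * (t * G) ^ 2 + a * (c * (t * G)) :=
        rpow_mul_rpow_two_sub_le_interpolation hc (by positivity) ha₀ ha₁
    _ ≤ (1 - a) * (B * (t * G * t + c / 4)) + a * (B * (t * G * t + c / 4)) := by
        have : 0 ≤ 1 - a := by linarith
        gcongr
    _ = B * (t * G * t + c / 4) := by ring

lemma rpow_mul_rpow_two_sub_le_of_le_rpow (hA : 0 ≤ A) (hc : 0 ≤ c) (ht : 0 ≤ t)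
    (hcG : c * t ^ A ≤ G) (hGB : G ≤ B * t ^ A) (hB : 0 ≤ B) :
    c ^ degeneracyExponent A * (t * G) ^ (2 - degeneracyExponent A) ≤ B * (t * G * t) := by
  set a := degeneracyExponent A
  have ha₁ : a < 1 := degeneracyExponent_lt_one hA
  have hG : 0 ≤ G := le_trans (by positivity) hcG
  have htG : 0 ≤ t * G := by positivity
  have hct : c ^ a * t ^ A ≤ (t * G) ^ a := by
    have h := rpow_mul_rpow_le_rpow hc ht (degeneracyExponent_nonneg hA)
      (mul_rpow_add_one_le_mul hA ht hcG)
    rwa [add_one_mul_degeneracyExponent hA] at h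
  calc c ^ a * (t * G) ^ (2 - a) = c ^ a * (t * G) ^ (1 - a) * t * G := by
        rw [show 2 - a = 1 - a + 1 by ring, Real.rpow_add_one' htG (by linarith)]; ring
    _ ≤ c ^ a * (t * G) ^ (1 - a) * t * (B * t ^ A) := by gcongr
    _ = c ^ a * t ^ A * ((t * G) ^ (1 - a) * t * B) := by ring
    _ ≤ (t * G) ^ a * ((t * G) ^ (1 - a) * t * B) := by gcongr
    _ = (t * G) ^ a * (t * G) ^ (1 - a) * (t * B) := by ring
    _ = B * (t * G * t) := by
        rw [← Real.rpow_add' htG (by simp), add_sub_cancel, Real.rpow_one]; ring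

lemma rpow_mul_rpow_two_sub_le_of_le_max (hA : 0 ≤ A) (hc : 0 ≤ c) (hcB : c ≤ B) (ht : 0 ≤ t)
    (hcG : c * t ^ A ≤ G) (hGB : G ≤ B * max 1 (t ^ A)) :
    c ^ degeneracyExponent A * (t * G) ^ (2 - degeneracyExponent A) ≤ B * (t * G * t + c / 4) := by
  have hB : 0 ≤ B := hc.trans hcB
  rcases le_total t 1 with ht₁ | ht₁
  · rw [max_eq_left (Real.rpow_le_one ht ht₁ hA), mul_one] at hGB
    exact rpow_mul_rpow_two_sub_le_of_le_const hc hcB ht (le_trans (by positivity) hcG) hGB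
      (degeneracyExponent_nonneg hA) (degeneracyExponent_lt_one hA).le
  · rw [max_eq_right (Real.one_le_rpow ht₁ hA)] at hGB
    refine (rpow_mul_rpow_two_sub_le_of_le_rpow hA hc ht hcG hGB hB).trans ?_
    gcongr
    linarith

end PointwiseBounds

/-- `s` solves the momentum equation `s ξ * g (s ξ) = ξ` of a generalized Forchheimer flow, for
every size `ξ ≥ 0` of the pressure gradient. -/
def IsMomentumSolution (g s : ℝ → ℝ) : Prop :=
  ∀ ξ, 0 ≤ ξ → 0 ≤ s ξ ∧ s ξ * g (s ξ) = ξ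

/-- The conductivity `K ξ = 1 / g (s ξ)` of the flow, for `s` a solution of the momentum equation.
If `g 0 = 0`, its value at `ξ = 0` is the junk value `1 / 0 = 0`. -/
noncomputable def conductivity (g s : ℝ → ℝ) (ξ : ℝ) : ℝ := 1 / g (s ξ)

/-- The energy density `H ξ = ∫₀^(ξ²) K(√σ) dσ` of the flow. -/
noncomputable def energyDensity (g s : ℝ → ℝ) (ξ : ℝ) : ℝ :=
  ∫ σ in (0 : ℝ)..(ξ ^ 2), conductivity g s (Real.sqrt σ)

namespace IsMomentumSolution

variable {g s : ℝ → ℝ} {A B c ξ : ℝ}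

lemma pos (hs : IsMomentumSolution g s) (hξ : 0 < ξ) : 0 < s ξ := by
  refine (hs ξ hξ.le).1.lt_of_ne' fun h => hξ.ne ?_
  simpa only [h, zero_mul] using (hs ξ hξ.le).2

lemma apply_pos (hs : IsMomentumSolution g s) (hξ : 0 < ξ) : 0 < g (s ξ) :=
  pos_of_mul_pos_right (hξ.trans_eq (hs ξ hξ.le).2.symm) (hs ξ hξ.le).1

lemma conductivity_eq_div (hs : IsMomentumSolution g s) (hξ : 0 < ξ) :
    conductivity g s ξ = s ξ / ξ := by
  rw [conductivity, div_eq_div_iff (hs.apply_pos hξ).ne' hξ.ne', one_mul, (hs ξ hξ.le).2]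

lemma conductivity_pos (hs : IsMomentumSolution g s) (hξ : 0 < ξ) : 0 < conductivity g s ξ :=
  one_div_pos.2 (hs.apply_pos hξ)

lemma monotoneOn (hs : IsMomentumSolution g s) (hg : MonotoneOn g (Ici 0)) :
    MonotoneOn s (Ioi 0) := by
  intro x hx y hy hxy
  by_contra! hlt
  have hy₀ : 0 ≤ s y := (hs.pos hy).le
  have hgle : g (s y) ≤ g (s x) := hg hy₀ (hs.pos hx).le hlt.le
  have : y < x := by
    calc y = s y * g (s y) := (hs y (le_of_lt hy)).2.symm
      _ < s x * g (s y) := mul_lt_mul_of_pos_right hlt (hs.apply_pos hy)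
      _ ≤ s x * g (s x) := mul_le_mul_of_nonneg_left hgle (hs.pos hx).le
      _ = x := (hs x (le_of_lt hx)).2
  exact this.not_ge hxy

lemma antitoneOn_conductivity (hs : IsMomentumSolution g s) (hg : MonotoneOn g (Ici 0)) :
    AntitoneOn (conductivity g s) (Ioi 0) := fun _ hx _ hy hxy =>
  one_div_le_one_div_of_le (hs.apply_pos hx)
    (hg (hs.pos hx).le (hs.pos hy).le (hs.monotoneOn hg hx hy hxy))

lemma conductivity_le (hs : IsMomentumSolution g s) (hA : 0 ≤ A) (hc : 0 < c)
    (hlow : ∀ t, 0 ≤ t → c * t ^ A ≤ g t) (hξ : 0 < ξ) :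
    conductivity g s ξ ≤ c ^ (degeneracyExponent A - 1) * ξ ^ (-degeneracyExponent A) := by
  set a := degeneracyExponent A
  obtain ⟨hs₀, hsξ⟩ := hs ξ hξ.le
  have hpow : c * s ξ ^ (A + 1) ≤ ξ :=
    (mul_rpow_add_one_le_mul hA hs₀ (hlow _ hs₀)).trans_eq hsξ
  have hsle : c ^ (1 - a) * s ξ ≤ ξ ^ (1 - a) := by
    have h := rpow_mul_rpow_le_rpow hc.le hs₀
      (sub_nonneg.2 (degeneracyExponent_lt_one hA).le) hpow
    rwa [add_one_mul_one_sub_degeneracyExponent hA, Real.rpow_one] at h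
  calc conductivity g s ξ = s ξ / ξ := hs.conductivity_eq_div hξ
    _ ≤ (ξ ^ (1 - a) / c ^ (1 - a)) / ξ := by
        gcongr
        rwa [le_div_iff₀' (by positivity)]
    _ = c ^ (a - 1) * ξ ^ (-a) := by
        rw [← neg_sub 1 a, Real.rpow_neg hc.le, show -a = 1 - a - 1 by ring,
          Real.rpow_sub_one hξ.ne']
        ring

lemma conductivity_sqrt_le (hs : IsMomentumSolution g s) (hA : 0 ≤ A) (hc : 0 < c)
    (hlow : ∀ t, 0 ≤ t → c * t ^ A ≤ g t) {σ : ℝ} (hσ : 0 < σ) :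
    conductivity g s (Real.sqrt σ) ≤
      c ^ (degeneracyExponent A - 1) * σ ^ (-(degeneracyExponent A / 2)) := by
  refine (hs.conductivity_le hA hc hlow (Real.sqrt_pos.2 hσ)).trans_eq ?_
  rw [Real.sqrt_eq_rpow, ← Real.rpow_mul hσ.le]
  ring_nf

lemma intervalIntegrable_conductivity_sqrt (hs : IsMomentumSolution g s)
    (hg : MonotoneOn g (Ici 0)) (hA : 0 ≤ A) (hc : 0 < c)
    (hlow : ∀ t, 0 ≤ t → c * t ^ A ≤ g t) {b : ℝ} (hb : 0 ≤ b) :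
    IntervalIntegrable (fun σ => conductivity g s (Real.sqrt σ)) volume 0 b := by
  have hanti : AntitoneOn (fun σ => conductivity g s (Real.sqrt σ)) (Ioc 0 b) :=
    fun x hx y hy hxy => hs.antitoneOn_conductivity hg (Real.sqrt_pos.2 hx.1)
      (Real.sqrt_pos.2 hy.1) (Real.sqrt_le_sqrt hxy)
  have hbound :=
    intervalIntegrable_mul_rpow_neg_degeneracyExponent_half hA (c ^ (degeneracyExponent A - 1)) b
  refine hbound.mono_fun' ?_ ?_
  · rw [uIoc_of_le hb]
    exact (aemeasurable_restrict_of_antitoneOn measurableSet_Ioc hanti).aestronglyMeasurable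
  · rw [uIoc_of_le hb]
    refine ae_restrict_of_forall_mem measurableSet_Ioc fun σ hσ => ?_
    exact (Real.norm_of_nonneg (hs.conductivity_pos (Real.sqrt_pos.2 hσ.1)).le).trans_le
      (hs.conductivity_sqrt_le hA hc hlow hσ.1)

lemma energyDensity_le (hs : IsMomentumSolution g s) (hg : MonotoneOn g (Ici 0)) (hA : 0 ≤ A)
    (hc : 0 < c) (hlow : ∀ t, 0 ≤ t → c * t ^ A ≤ g t) (hξ : 0 ≤ ξ) :
    energyDensity g s ξ ≤ 2 / (2 - degeneracyExponent A) *
      (c ^ (degeneracyExponent A - 1) * ξ ^ (2 - degeneracyExponent A)) := by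
  set a := degeneracyExponent A
  have ha₁ : a < 1 := degeneracyExponent_lt_one hA
  have hξa : (ξ ^ 2) ^ (-(a / 2) + 1) = ξ ^ (2 - a) := by
    rw [← Real.rpow_natCast_mul hξ]
    push_cast
    ring_nf
  calc energyDensity g s ξ ≤ ∫ σ in (0 : ℝ)..(ξ ^ 2), c ^ (a - 1) * σ ^ (-(a / 2)) :=
        intervalIntegral.integral_mono_on_of_le_Ioo (sq_nonneg ξ)
          (hs.intervalIntegrable_conductivity_sqrt hg hA hc hlow (sq_nonneg ξ))
          (intervalIntegrable_mul_rpow_neg_degeneracyExponent_half hA _ _)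
          fun σ hσ => hs.conductivity_sqrt_le hA hc hlow hσ.1
    _ = c ^ (a - 1) * (ξ ^ (2 - a) / (-(a / 2) + 1)) := by
        rw [intervalIntegral.integral_const_mul, integral_rpow (Or.inl (by linarith)), hξa,
          Real.zero_rpow (by linarith), sub_zero]
    _ = 2 / (2 - a) * (c ^ (a - 1) * ξ ^ (2 - a)) := by
        have : 2 - a ≠ 0 := by linarith
        rw [show -(a / 2) + 1 = (2 - a) / 2 by ring]
        field_simp

lemma mul_le_energyDensity (hs : IsMomentumSolution g s) (hg : MonotoneOn g (Ici 0)) (hA : 0 ≤ A)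
    (hc : 0 < c) (hlow : ∀ t, 0 ≤ t → c * t ^ A ≤ g t) (hξ : 0 ≤ ξ) :
    ξ * s ξ ≤ energyDensity g s ξ := by
  rcases hξ.eq_or_lt with rfl | hpos
  · simp [energyDensity]
  · calc ξ * s ξ = ∫ _ in (0 : ℝ)..(ξ ^ 2), conductivity g s ξ := by
          rw [intervalIntegral.integral_const, hs.conductivity_eq_div hpos, smul_eq_mul]
          field_simp
          ring
      _ ≤ energyDensity g s ξ :=
          intervalIntegral.integral_mono_on_of_le_Ioo (sq_nonneg ξ) intervalIntegrable_const
            (hs.intervalIntegrable_conductivity_sqrt hg hA hc hlow (sq_nonneg ξ))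
            fun σ hσ => hs.antitoneOn_conductivity hg (Real.sqrt_pos.2 hσ.1) hpos
              (Real.sqrt_le_iff.2 ⟨hξ, hσ.2.le⟩)

lemma rpow_mul_rpow_two_sub_le_energyDensity (hs : IsMomentumSolution g s)
    (hg : MonotoneOn g (Ici 0)) (hA : 0 ≤ A) (hc : 0 < c)
    (hlow : ∀ t, 0 ≤ t → c * t ^ A ≤ g t) (hup : ∀ t, 0 ≤ t → g t ≤ B * max 1 (t ^ A))
    (hξ : 0 ≤ ξ) :
    c ^ degeneracyExponent A * ξ ^ (2 - degeneracyExponent A) ≤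
      B * (energyDensity g s ξ + c / 4) := by
  obtain ⟨hs₀, hsξ⟩ := hs ξ hξ
  have hcB : c ≤ B := by
    simpa only [Real.one_rpow, mul_one, max_self] using
      (hlow 1 zero_le_one).trans (hup 1 zero_le_one)
  have hB : 0 ≤ B := hc.le.trans hcB
  have hpoint := rpow_mul_rpow_two_sub_le_of_le_max hA hc.le hcB hs₀ (hlow _ hs₀) (hup _ hs₀)
  rw [hsξ] at hpoint
  refine hpoint.trans ?_
  gcongr
  exact hs.mul_le_energyDensity hg hA hc hlow hξ

end IsMomentumSolution

theorem stmt11_general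
    (N : ℕ) (hN : 1 ≤ N)
    (α : ℕ → ℝ) (hα : ∀ j ≤ N, α j ∈ Icc 0 (α N))
    (aa : ℕ → ℝ) (ha0 : 0 < aa 0) (haN : 0 < aa N) (hann : ∀ j ≤ N, 0 ≤ aa j)
    (g : ℝ → ℝ)
    (hg : ∀ t : ℝ, 0 ≤ t → g t = ∑ j ∈ Finset.range (N + 1), aa j * t ^ α j)
    (s : ℝ → ℝ) (hs : IsMomentumSolution g s)
    (K : ℝ → ℝ) (hK : ∀ ξ : ℝ, 0 ≤ ξ → K ξ = 1 / g (s ξ))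
    (M : ℝ) (hMub : ∀ j ≤ N, aa j ≤ M)
    (a : ℝ) (ha : a = α N / (α N + 1))
    (W₁ : ℝ) (hW₁ : W₁ = aa N ^ a / (2 * (N : ℝ) * M))
    (W₂ : ℝ) (hW₂ : W₂ = (N : ℝ) * M / (min (aa 0) (aa N) * aa N ^ (1 - a)))
    (H : ℝ → ℝ)
    (hH : ∀ ξ : ℝ, 0 ≤ ξ → H ξ = ∫ σ in (0 : ℝ)..(ξ ^ 2), K (Real.sqrt σ))
    (ξ : ℝ) (hξ : 0 ≤ ξ) :
    W₁ * ξ ^ (2 - a) - aa N / 4 ≤ H ξ ∧ H ξ ≤ 2 * W₂ * ξ ^ (2 - a) := by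
  obtain rfl : a = degeneracyExponent (α N) := ha
  have hHξ : H ξ = energyDensity g s ξ := by
    simp only [hH ξ hξ, hK _ (Real.sqrt_nonneg _), energyDensity, conductivity]
  have hM : 0 < M := haN.trans_le (hMub N le_rfl)
  have hN' : (1 : ℝ) ≤ N := by exact_mod_cast hN
  have hA : 0 ≤ α N := (hα N le_rfl).1
  simp only [← Finset.mem_range_succ_iff] at hα hann
  have hmono : MonotoneOn g (Ici 0) :=
    (monotoneOn_sum_mul_rpow (fun j hj => (hα j hj).1) hann).congr fun t ht => (hg t ht).symm
  have hlow (t : ℝ) (ht : 0 ≤ t) : aa N * t ^ α N ≤ g t :=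
    (mul_rpow_le_sum_mul_rpow hann (Finset.self_mem_range_succ N) ht).trans_eq (hg t ht).symm
  have hup (t : ℝ) (ht : 0 ≤ t) : g t ≤ 2 * N * M * max 1 (t ^ α N) := by
    rw [hg t ht]
    refine (sum_mul_rpow_le_sum_mul_max hα hann ht).trans ?_
    gcongr
    exact sum_range_succ_le_two_mul hN hM.le hMub
  rw [hHξ]
  constructor
  · rw [sub_le_iff_le_add, hW₁, div_mul_eq_mul_div, div_le_iff₀' (by positivity)]
    exact hs.rpow_mul_rpow_two_sub_le_energyDensity hmono hA haN hlow hup hξ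
  · refine (hs.energyDensity_le hmono hA haN hlow hξ).trans ?_
    rw [mul_assoc, hW₂]
    have ha₁ := degeneracyExponent_lt_one hA
    gcongr
    · exact div_le_self zero_le_two (by linarith)
    · exact rpow_sub_one_le_div_min_mul_rpow _ hN' ha0 haN (hMub N le_rfl)

/-- Inequality (1.19): with `H(ξ) = ∫₀^(ξ²) K(√σ) dσ` one has
`W₁ ξ^(2-a) - a_N/2 ≤ H(ξ) ≤ 2 W₂ ξ^(2-a)` for all `ξ ≥ 0`. -/
theorem stmt11
    (N : ℕ) (hN : 1 ≤ N)
    (α : ℕ → ℝ) (hα0 : α 0 = 0) (hαmono : ∀ i < N, α i < α (i + 1))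
    (aa : ℕ → ℝ) (ha0 : 0 < aa 0) (haN : 0 < aa N) (hann : ∀ j ≤ N, 0 ≤ aa j)
    (g : ℝ → ℝ)
    (hg : ∀ t : ℝ, 0 ≤ t → g t = ∑ j ∈ Finset.range (N + 1), aa j * t ^ α j)
    (s : ℝ → ℝ) (hs : ∀ ξ : ℝ, 0 ≤ ξ → 0 ≤ s ξ ∧ s ξ * g (s ξ) = ξ)
    (K : ℝ → ℝ) (hK : ∀ ξ : ℝ, 0 ≤ ξ → K ξ = 1 / g (s ξ))
    (M : ℝ) (hMub : ∀ j ≤ N, aa j ≤ M) (hMmem : ∃ j ≤ N, aa j = M)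
    (a : ℝ) (ha : a = α N / (α N + 1))
    (W₁ : ℝ) (hW₁ : W₁ = aa N ^ a / (2 * (N : ℝ) * M))
    (W₂ : ℝ) (hW₂ : W₂ = (N : ℝ) * M / (min (aa 0) (aa N) * aa N ^ (1 - a)))
    (H : ℝ → ℝ)
    (hH : ∀ ξ : ℝ, 0 ≤ ξ → H ξ = ∫ σ in (0:ℝ)..(ξ ^ 2), K (Real.sqrt σ)) :
    ∀ ξ : ℝ, 0 ≤ ξ →
      W₁ * ξ ^ (2 - a) - aa N / 2 ≤ H ξ ∧ H ξ ≤ 2 * W₂ * ξ ^ (2 - a) := fun ξ hξ =>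
  (stmt11_general N hN α (mem_Icc_of_le_succ hα0 fun i hi => (hαmono i hi).le) aa ha0 haN hann
    g hg s hs K hK M hMub a ha W₁ hW₁ W₂ hW₂ H hH ξ hξ).imp_left fun h => by linarith
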